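/- Let (L, I) be an integral system on a set X. Then the set L¹ of I-integrable functions is a real vector subspace of ℝ^X closed under pointwise maximum and minimum, it contains L, and the Daniell extension I¹ : L¹ → ℝ is linear, positive (I¹(f) ≥ 0 whenever f ∈ L¹ satisfies f ≥ 0 pointwise), and satisfies I¹(f) = I(f) for every f ∈ L. -/

import Mathlib

open Filter Topology

/-- An integral system on a set `X`: a linear lattice `L` of real-valued functions on `X`
(a vector subspace of `ℝ^X` closed under pointwise max and min) together with a
preintegral `I` on it (a positive linear functional that is continuous in the sense that
`I fₙ → 0` whenever `fₙ ∈ L` are nonnegative and decrease pointwise to `0`). -/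
structure IntegralSystem (X : Type*) where
  L : Set (X → ℝ)
  I : (X → ℝ) → ℝ
  zero_mem : (0 : X → ℝ) ∈ L
  add_mem : ∀ ⦃f g : X → ℝ⦄, f ∈ L → g ∈ L → f + g ∈ L
  smul_mem : ∀ (c : ℝ) ⦃f : X → ℝ⦄, f ∈ L → c • f ∈ L
  sup_mem : ∀ ⦃f g : X → ℝ⦄, f ∈ L → g ∈ L → f ⊔ g ∈ L
  inf_mem : ∀ ⦃f g : X → ℝ⦄, f ∈ L → g ∈ L → f ⊓ g ∈ L
  I_add : ∀ ⦃f g : X → ℝ⦄, f ∈ L → g ∈ L → I (f + g) = I f + I g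
  I_smul : ∀ (c : ℝ) ⦃f : X → ℝ⦄, f ∈ L → I (c • f) = c * I f
  I_pos : ∀ ⦃f : X → ℝ⦄, f ∈ L → (∀ x, 0 ≤ f x) → 0 ≤ I f
  I_cont : ∀ f : ℕ → X → ℝ, (∀ n, f n ∈ L) → (∀ n x, 0 ≤ f n x) →
    (∀ n x, f (n + 1) x ≤ f n x) →
    (∀ x, Tendsto (fun n => f n x) atTop (𝓝 0)) →
    Tendsto (fun n => I (f n)) atTop (𝓝 0)

variable {X : Type*}

/-- `f : X → (−∞,∞]` belongs to `L_↑` iff some sequence in `L` increases pointwise to `f`. -/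
def MemLup (S : IntegralSystem X) (f : X → EReal) : Prop :=
  ∃ g : ℕ → X → ℝ, (∀ n, g n ∈ S.L) ∧ (∀ n x, g n x ≤ g (n + 1) x) ∧
    ∀ x, Tendsto (fun n => ((g n x : EReal))) atTop (𝓝 (f x))

/-- For `f ∈ L_↑`, `I_↑ f = lim I (g n)` for any sequence `(g n)` in `L` increasing
pointwise to `f`; the value does not depend on the chosen sequence, so we may define it as
the supremum of all such limits. -/
noncomputable def Iup (S : IntegralSystem X) (f : X → EReal) : EReal :=
  sSup { c : EReal | ∃ g : ℕ → X → ℝ, (∀ n, g n ∈ S.L) ∧ (∀ n x, g n x ≤ g (n + 1) x) ∧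
    (∀ x, Tendsto (fun n => ((g n x : EReal))) atTop (𝓝 (f x))) ∧
    Tendsto (fun n => ((S.I (g n) : EReal))) atTop (𝓝 c) }

/-- `L_↓ = −L_↑`. -/
def MemLdown (S : IntegralSystem X) (f : X → EReal) : Prop :=
  MemLup S (fun x => -(f x))

/-- `I_↓ f = −I_↑(−f)`. -/
noncomputable def Idown (S : IntegralSystem X) (f : X → EReal) : EReal :=
  -(Iup S (fun x => -(f x)))

/-- The upper integral `Ī f = inf { I_↑ g : g ∈ L_↑, f ≤ g }` (with `inf ∅ = ∞`). -/
noncomputable def upperInt (S : IntegralSystem X) (f : X → EReal) : EReal :=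
  sInf (Iup S '' { g | MemLup S g ∧ ∀ x, f x ≤ g x })

/-- The lower integral `I̲ f = sup { I_↓ g : g ∈ L_↓, g ≤ f }` (with `sup ∅ = −∞`). -/
noncomputable def lowerInt (S : IntegralSystem X) (f : X → EReal) : EReal :=
  sSup (Idown S '' { g | MemLdown S g ∧ ∀ x, g x ≤ f x })

/-- `f : X → ℝ` is `I`-integrable iff its lower and upper integrals coincide and are finite. -/
def Integrable1 (S : IntegralSystem X) (f : X → ℝ) : Prop :=
  ∃ c : ℝ, lowerInt S (fun x => ((f x : EReal))) = (c : EReal) ∧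
    upperInt S (fun x => ((f x : EReal))) = (c : EReal)

/-- The Daniell extension `I¹` of `I`: the common value of the lower and upper integrals of
an integrable function. -/
noncomputable def Int1 (S : IntegralSystem X) (f : X → ℝ) : ℝ :=
  (upperInt S (fun x => ((f x : EReal)))).toReal

/-!
Continuity of `I` makes `I_↑` well defined, monotone and additive on `L_↑`, so `Ī` is sublinear,
and `f` has integral `c` exactly when `Ī f ≤ c` and `Ī (-f) ≤ -c`. Linearity is then formal.
For the lattice operations, integrability of `f` means that `f` lies between `-H` and `G` with
`G, H ∈ L_↑` and `I_↑ G + I_↑ H` arbitrarily small; if `(G, H)` and `(G', H')` bracket `f` and `g`,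
then `(G ⊔ G', H ⊓ H')` brackets `f ⊔ g`, with a gap at most the sum of the two gaps.
-/

lemma sup_add_inf_le_add_add_add {α : Type*} [AddCommMonoid α] [LinearOrder α]
    [IsOrderedAddMonoid α] {a b c d : α} (hab : 0 ≤ a + b) (hcd : 0 ≤ c + d) :
    a ⊔ c + b ⊓ d ≤ (a + b) + (c + d) := by
  rcases le_total a c with h | h
  · rw [sup_eq_right.2 h]
    exact (add_le_add_right inf_le_right c).trans (le_add_of_nonneg_left hab)
  · rw [sup_eq_left.2 h]
    exact (add_le_add_right inf_le_left a).trans (le_add_of_nonneg_right hcd)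

lemma add_nonneg_of_coe_le_of_coe_neg_le {a : ℝ} {b c : EReal} (hb : (a : EReal) ≤ b)
    (hc : ((-a : ℝ) : EReal) ≤ c) : 0 ≤ b + c := by
  simpa only [← EReal.coe_add, add_neg_cancel, EReal.coe_zero] using add_le_add hb hc

namespace IntegralSystem

variable (S : IntegralSystem X)

lemma neg_mem {f : X → ℝ} (hf : f ∈ S.L) : -f ∈ S.L := by
  simpa using S.smul_mem (-1) hf

lemma sub_mem {f g : X → ℝ} (hf : f ∈ S.L) (hg : g ∈ S.L) : f - g ∈ S.L := by
  simpa only [sub_eq_add_neg] using S.add_mem hf (S.neg_mem hg)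

lemma I_zero : S.I 0 = 0 := by
  simpa using S.I_smul 0 S.zero_mem

lemma I_neg {f : X → ℝ} (hf : f ∈ S.L) : S.I (-f) = -S.I f := by
  simpa using S.I_smul (-1) hf

lemma I_sub {f g : X → ℝ} (hf : f ∈ S.L) (hg : g ∈ S.L) : S.I (f - g) = S.I f - S.I g := by
  rw [sub_eq_add_neg, S.I_add hf (S.neg_mem hg), S.I_neg hg, sub_eq_add_neg]

lemma I_mono {f g : X → ℝ} (hf : f ∈ S.L) (hg : g ∈ S.L) (hfg : f ≤ g) :
    S.I f ≤ S.I g := by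
  have h := S.I_pos (S.sub_mem hg hf) fun x => sub_nonneg.2 (hfg x)
  rwa [S.I_sub hg hf, sub_nonneg] at h

lemma tendsto_I_of_monotone {u : ℕ → X → ℝ} {g : X → ℝ} (hu : ∀ n, u n ∈ S.L)
    (hmono : Monotone u) (hg : g ∈ S.L) (hlim : ∀ x, Tendsto (fun n => u n x) atTop (𝓝 (g x))) :
    Tendsto (fun n => S.I (u n)) atTop (𝓝 (S.I g)) := by
  have hle : ∀ n x, u n x ≤ g x := fun n x =>
    Monotone.ge_of_tendsto (fun _ _ hnm => hmono hnm x) (hlim x) n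
  have hgap : Tendsto (fun n => S.I (g - u n)) atTop (𝓝 0) :=
    S.I_cont (fun n => g - u n) (fun n => S.sub_mem hg (hu n))
      (fun n x => sub_nonneg.2 (hle n x))
      (fun n x => sub_le_sub_left (hmono n.le_succ x) (g x))
      (fun x => by simpa using (hlim x).const_sub (g x))
  simpa [S.I_sub hg (hu _)] using hgap.const_sub (S.I g)

end IntegralSystem

/-- `uₙ ↑ F`: the sequence `u` in `L` increases pointwise to `F`. These are the sequences that
witness `F ∈ L_↑` and along which `I_↑ F` is computed. -/
structure IncreasesTo (S : IntegralSystem X) (u : ℕ → X → ℝ) (F : X → EReal) : Prop where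
  mem : ∀ n, u n ∈ S.L
  le_succ : ∀ n x, u n x ≤ u (n + 1) x
  tendsto : ∀ x, Tendsto (fun n => (u n x : EReal)) atTop (𝓝 (F x))

section

variable {S : IntegralSystem X}

namespace IncreasesTo

variable {u v : ℕ → X → ℝ} {F G : X → EReal}

lemma memLup (h : IncreasesTo S u F) : MemLup S F :=
  ⟨u, h.mem, h.le_succ, h.tendsto⟩

lemma monotone (h : IncreasesTo S u F) : Monotone u :=
  monotone_nat_of_le_succ h.le_succ

lemma le (h : IncreasesTo S u F) (n : ℕ) (x : X) : (u n x : EReal) ≤ F x :=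
  Monotone.ge_of_tendsto (fun _ _ hnm => EReal.coe_le_coe (h.monotone hnm x)) (h.tendsto x) n

lemma ne_bot (h : IncreasesTo S u F) (x : X) : F x ≠ ⊥ :=
  ne_bot_of_le_ne_bot (EReal.coe_ne_bot _) (h.le 0 x)

lemma const {f : X → ℝ} (hf : f ∈ S.L) : IncreasesTo S (fun _ => f) fun x => (f x : EReal) :=
  ⟨fun _ => hf, fun _ _ => le_rfl, fun _ => tendsto_const_nhds⟩

lemma add (hu : IncreasesTo S u F) (hv : IncreasesTo S v G) : IncreasesTo S (u + v) (F + G) where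
  mem n := S.add_mem (hu.mem n) (hv.mem n)
  le_succ n x := add_le_add (hu.le_succ n x) (hv.le_succ n x)
  tendsto x := (EReal.continuousAt_add (p := (F x, G x)) (.inr (hv.ne_bot x))
    (.inl (hu.ne_bot x))).tendsto.comp ((hu.tendsto x).prodMk_nhds (hv.tendsto x))

lemma const_mul {c : ℝ} (hc : 0 ≤ c) (hu : IncreasesTo S u F) :
    IncreasesTo S (c • u) fun x => c * F x where
  mem n := S.smul_mem c (hu.mem n)
  le_succ n x := mul_le_mul_of_nonneg_left (hu.le_succ n x) hc
  tendsto x := EReal.Tendsto.const_mul (hu.tendsto x) (.inl (EReal.coe_ne_bot c))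
    (.inl (EReal.coe_ne_top c))

lemma sup (hu : IncreasesTo S u F) (hv : IncreasesTo S v G) : IncreasesTo S (u ⊔ v) (F ⊔ G) where
  mem n := S.sup_mem (hu.mem n) (hv.mem n)
  le_succ n x := sup_le_sup (hu.le_succ n x) (hv.le_succ n x)
  tendsto x := by
    simpa only [Pi.sup_apply, EReal.coe_strictMono.monotone.map_max] using
      (hu.tendsto x).sup_nhds (hv.tendsto x)

lemma inf (hu : IncreasesTo S u F) (hv : IncreasesTo S v G) : IncreasesTo S (u ⊓ v) (F ⊓ G) where
  mem n := S.inf_mem (hu.mem n) (hv.mem n)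
  le_succ n x := inf_le_inf (hu.le_succ n x) (hv.le_succ n x)
  tendsto x := by
    simpa only [Pi.inf_apply, EReal.coe_strictMono.monotone.map_min] using
      (hu.tendsto x).inf_nhds (hv.tendsto x)

lemma monotone_I (hu : IncreasesTo S u F) : Monotone fun n => (S.I (u n) : EReal) :=
  fun n m hnm => EReal.coe_le_coe (S.I_mono (hu.mem n) (hu.mem m) (hu.monotone hnm))

lemma I_le_iSup {g : X → ℝ} (hu : IncreasesTo S u F) (hg : g ∈ S.L)
    (hgF : ∀ x, (g x : EReal) ≤ F x) : (S.I g : EReal) ≤ ⨆ n, (S.I (u n) : EReal) := by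
  have hmem : ∀ n, g ⊓ u n ∈ S.L := fun n => S.inf_mem hg (hu.mem n)
  have hlim : ∀ x, Tendsto (fun n => (g ⊓ u n) x) atTop (𝓝 (g x)) := fun x => by
    rw [← EReal.tendsto_coe, ← inf_eq_left.2 (hgF x)]
    simpa only [Pi.inf_apply, EReal.coe_strictMono.monotone.map_min] using
      ((tendsto_const_nhds (x := (g x : EReal))).inf_nhds (hu.tendsto x))
  have htendsto : Tendsto (fun n => S.I (g ⊓ u n)) atTop (𝓝 (S.I g)) :=
    S.tendsto_I_of_monotone hmem (fun _ _ hnm => inf_le_inf_left g (hu.monotone hnm)) hg hlim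
  refine le_of_tendsto' (EReal.tendsto_coe.2 htendsto) fun n => ?_
  calc (S.I (g ⊓ u n) : EReal) ≤ S.I (u n) :=
        EReal.coe_le_coe (S.I_mono (hmem n) (hu.mem n) inf_le_right)
    _ ≤ ⨆ n, (S.I (u n) : EReal) := le_iSup (fun n => (S.I (u n) : EReal)) n

lemma Iup_eq_iSup (hu : IncreasesTo S u F) : Iup S F = ⨆ n, (S.I (u n) : EReal) := by
  apply le_antisymm
  · refine sSup_le ?_
    rintro c ⟨v, hmem, hle, hlim, hc⟩
    have hv : IncreasesTo S v F := ⟨hmem, hle, hlim⟩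
    exact le_of_tendsto' hc fun n => hu.I_le_iSup (hv.mem n) (hv.le n)
  · exact le_sSup ⟨u, hu.mem, hu.le_succ, hu.tendsto, tendsto_atTop_iSup hu.monotone_I⟩

lemma tendsto_Iup (hu : IncreasesTo S u F) :
    Tendsto (fun n => (S.I (u n) : EReal)) atTop (𝓝 (Iup S F)) :=
  hu.Iup_eq_iSup ▸ tendsto_atTop_iSup hu.monotone_I

end IncreasesTo

lemma memLup_iff_exists_increasesTo {F : X → EReal} : MemLup S F ↔ ∃ u, IncreasesTo S u F :=
  ⟨fun ⟨u, hmem, hle, hlim⟩ => ⟨u, hmem, hle, hlim⟩, fun ⟨_, hu⟩ => hu.memLup⟩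

namespace MemLup

variable {F G : X → EReal}

lemma coe {f : X → ℝ} (hf : f ∈ S.L) : MemLup S fun x => (f x : EReal) :=
  (IncreasesTo.const hf).memLup

lemma add (hF : MemLup S F) (hG : MemLup S G) : MemLup S (F + G) := by
  obtain ⟨u, hu⟩ := memLup_iff_exists_increasesTo.1 hF
  obtain ⟨v, hv⟩ := memLup_iff_exists_increasesTo.1 hG
  exact (hu.add hv).memLup

lemma const_mul {c : ℝ} (hc : 0 ≤ c) (hF : MemLup S F) : MemLup S fun x => c * F x := by
  obtain ⟨u, hu⟩ := memLup_iff_exists_increasesTo.1 hF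
  exact (hu.const_mul hc).memLup

lemma sup (hF : MemLup S F) (hG : MemLup S G) : MemLup S (F ⊔ G) := by
  obtain ⟨u, hu⟩ := memLup_iff_exists_increasesTo.1 hF
  obtain ⟨v, hv⟩ := memLup_iff_exists_increasesTo.1 hG
  exact (hu.sup hv).memLup

lemma inf (hF : MemLup S F) (hG : MemLup S G) : MemLup S (F ⊓ G) := by
  obtain ⟨u, hu⟩ := memLup_iff_exists_increasesTo.1 hF
  obtain ⟨v, hv⟩ := memLup_iff_exists_increasesTo.1 hG
  exact (hu.inf hv).memLup

end MemLup

section Iup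

variable {F G : X → EReal}

lemma Iup_coe {f : X → ℝ} (hf : f ∈ S.L) : Iup S (fun x => (f x : EReal)) = S.I f :=
  tendsto_nhds_unique (IncreasesTo.const hf).tendsto_Iup tendsto_const_nhds

lemma Iup_ne_bot (hF : MemLup S F) : Iup S F ≠ ⊥ := by
  obtain ⟨u, hu⟩ := memLup_iff_exists_increasesTo.1 hF
  exact ne_bot_of_le_ne_bot (EReal.coe_ne_bot _) (hu.monotone_I.ge_of_tendsto hu.tendsto_Iup 0)

lemma Iup_mono (hF : MemLup S F) (hG : MemLup S G) (hFG : F ≤ G) : Iup S F ≤ Iup S G := by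
  obtain ⟨u, hu⟩ := memLup_iff_exists_increasesTo.1 hF
  obtain ⟨v, hv⟩ := memLup_iff_exists_increasesTo.1 hG
  rw [hu.Iup_eq_iSup, hv.Iup_eq_iSup]
  exact iSup_le fun n => hv.I_le_iSup (hu.mem n) fun x => (hu.le n x).trans (hFG x)

lemma Iup_add (hF : MemLup S F) (hG : MemLup S G) : Iup S (F + G) = Iup S F + Iup S G := by
  obtain ⟨u, hu⟩ := memLup_iff_exists_increasesTo.1 hF
  obtain ⟨v, hv⟩ := memLup_iff_exists_increasesTo.1 hG
  refine tendsto_nhds_unique (hu.add hv).tendsto_Iup ?_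
  have hI : ∀ n, (S.I ((u + v) n) : EReal) = S.I (u n) + S.I (v n) := fun n => by
    rw [Pi.add_apply, S.I_add (hu.mem n) (hv.mem n), EReal.coe_add]
  simp only [hI]
  exact (EReal.continuousAt_add (p := (Iup S F, Iup S G)) (.inr (Iup_ne_bot hG))
    (.inl (Iup_ne_bot hF))).tendsto.comp (hu.tendsto_Iup.prodMk_nhds hv.tendsto_Iup)

lemma Iup_const_mul {c : ℝ} (hc : 0 ≤ c) (hF : MemLup S F) :
    Iup S (fun x => c * F x) = c * Iup S F := by
  obtain ⟨u, hu⟩ := memLup_iff_exists_increasesTo.1 hF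
  refine tendsto_nhds_unique (hu.const_mul hc).tendsto_Iup ?_
  simp only [Pi.smul_apply, S.I_smul c (hu.mem _), EReal.coe_mul]
  exact EReal.Tendsto.const_mul hu.tendsto_Iup (.inl (EReal.coe_ne_bot c))
    (.inl (EReal.coe_ne_top c))

end Iup

section upperInt

variable {f g : X → EReal}

lemma upperInt_le_Iup {G : X → EReal} (hG : MemLup S G) (hfG : f ≤ G) :
    upperInt S f ≤ Iup S G :=
  sInf_le ⟨G, ⟨hG, hfG⟩, rfl⟩

lemma le_upperInt_iff {a : EReal} :
    a ≤ upperInt S f ↔ ∀ G, MemLup S G → f ≤ G → a ≤ Iup S G := by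
  simp only [upperInt, le_sInf_iff, Set.forall_mem_image, Set.mem_ofPred_eq, and_imp, Pi.le_def]

lemma upperInt_lt_iff {a : EReal} :
    upperInt S f < a ↔ ∃ G, MemLup S G ∧ f ≤ G ∧ Iup S G < a := by
  simpa using (le_upperInt_iff (S := S) (f := f) (a := a)).not

lemma upperInt_coe {f : X → ℝ} (hf : f ∈ S.L) : upperInt S (fun x => (f x : EReal)) = S.I f := by
  rw [← Iup_coe hf]
  exact le_antisymm (upperInt_le_Iup (.coe hf) le_rfl)
    (le_upperInt_iff.2 fun G hG hfG => Iup_mono (.coe hf) hG hfG)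

lemma upperInt_nonneg (hf : 0 ≤ f) : 0 ≤ upperInt S f := by
  refine le_upperInt_iff.2 fun G hG hfG => ?_
  have h := Iup_mono (.coe S.zero_mem) hG (hf.trans hfG)
  rwa [Iup_coe S.zero_mem, S.I_zero, EReal.coe_zero] at h

lemma upperInt_add_le (hf : upperInt S f ≠ ⊤) (hg : upperInt S g ≠ ⊤) :
    upperInt S (f + g) ≤ upperInt S f + upperInt S g := by
  refine EReal.le_add_of_forall_gt (.inr hg) (.inl hf) fun a ha b hb => ?_
  obtain ⟨F, hF, hfF, hFa⟩ := upperInt_lt_iff.1 ha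
  obtain ⟨G, hG, hgG, hGb⟩ := upperInt_lt_iff.1 hb
  calc upperInt S (f + g) ≤ Iup S (F + G) := upperInt_le_Iup (hF.add hG) (add_le_add hfF hgG)
    _ = Iup S F + Iup S G := Iup_add hF hG
    _ ≤ a + b := add_le_add hFa.le hGb.le

lemma upperInt_const_mul_le {c : ℝ} (hc : 0 < c) :
    upperInt S (fun x => c * f x) ≤ c * upperInt S f := by
  have hc' : (0 : EReal) < c := EReal.coe_pos.2 hc
  rw [← EReal.div_le_iff_le_mul hc' (EReal.coe_ne_top c), le_upperInt_iff]
  intro G hG hfG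
  rw [EReal.div_le_iff_le_mul hc' (EReal.coe_ne_top c), ← Iup_const_mul hc.le hG]
  exact upperInt_le_Iup (hG.const_mul hc.le) fun x => mul_le_mul_of_nonneg_left (hfG x) hc'.le

lemma lowerInt_eq_neg_upperInt_neg : lowerInt S f = -upperInt S (-f) := by
  apply le_antisymm
  · refine sSup_le ?_
    rintro _ ⟨G, ⟨hG, hGf⟩, rfl⟩
    exact EReal.neg_le_neg_iff.2 (upperInt_le_Iup hG fun x => EReal.neg_le_neg_iff.2 (hGf x))
  · refine EReal.neg_le.2 (le_upperInt_iff.2 fun G hG hfG => EReal.neg_le.2 (le_sSup ?_))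
    refine ⟨-G, ⟨?_, fun x => EReal.neg_le.2 (hfG x)⟩, ?_⟩
    · simpa [MemLdown] using hG
    · simp [Idown]

lemma lowerInt_coe_eq_neg (f : X → ℝ) :
    lowerInt S (fun x => (f x : EReal)) = -upperInt S (fun x => ((-f) x : EReal)) :=
  lowerInt_eq_neg_upperInt_neg

end upperInt

lemma upperInt_add_upperInt_neg_nonneg {f : X → ℝ}
    (hf : upperInt S (fun x => (f x : EReal)) ≠ ⊤)
    (hf' : upperInt S (fun x => ((-f) x : EReal)) ≠ ⊤) :
    0 ≤ upperInt S (fun x => (f x : EReal)) + upperInt S (fun x => ((-f) x : EReal)) :=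
  (upperInt_nonneg fun _ => add_nonneg_of_coe_le_of_coe_neg_le le_rfl le_rfl).trans
    (upperInt_add_le hf hf')

lemma lowerInt_le_upperInt {f : X → ℝ} (hu : upperInt S (fun x => (f x : EReal)) ≠ ⊤)
    (hl : lowerInt S (fun x => (f x : EReal)) ≠ ⊥) :
    lowerInt S (fun x => (f x : EReal)) ≤ upperInt S (fun x => (f x : EReal)) := by
  rw [← EReal.sub_nonneg (.inl hu) (.inr hl), lowerInt_coe_eq_neg, sub_eq_add_neg, neg_neg]
  rw [lowerInt_coe_eq_neg, ne_eq, EReal.neg_eq_bot_iff] at hl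
  exact upperInt_add_upperInt_neg_nonneg hu hl

/-- The real function `f` is `I`-integrable with `I¹ f = c`. -/
def HasInt1 (S : IntegralSystem X) (f : X → ℝ) (c : ℝ) : Prop :=
  lowerInt S (fun x => (f x : EReal)) = c ∧ upperInt S (fun x => (f x : EReal)) = c

lemma Integrable1.hasInt1 {f : X → ℝ} (hf : Integrable1 S f) : HasInt1 S f (Int1 S f) := by
  obtain ⟨c, hlower, hupper⟩ := hf
  rw [Int1, hupper, EReal.toReal_coe]
  exact ⟨hlower, hupper⟩

lemma hasInt1_iff_upperInt_le {f : X → ℝ} {c : ℝ} :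
    HasInt1 S f c ↔ upperInt S (fun x => (f x : EReal)) ≤ c ∧
      upperInt S (fun x => ((-f) x : EReal)) ≤ (-c : ℝ) := by
  rw [HasInt1, EReal.coe_neg, EReal.le_neg, ← lowerInt_coe_eq_neg]
  refine ⟨fun ⟨hl, hu⟩ => ⟨hu.le, hl.ge⟩, fun ⟨hu, hl⟩ => ?_⟩
  have hle : lowerInt S (fun x => (f x : EReal)) ≤ upperInt S fun x => (f x : EReal) :=
    lowerInt_le_upperInt (ne_top_of_le_ne_top (EReal.coe_ne_top c) hu)
      (ne_bot_of_le_ne_bot (EReal.coe_ne_bot c) hl)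
  exact ⟨(hle.trans hu).antisymm hl, hu.antisymm (hl.trans hle)⟩

namespace HasInt1

variable {f g : X → ℝ} {c d : ℝ}

lemma integrable1 (hf : HasInt1 S f c) : Integrable1 S f :=
  ⟨c, hf⟩

lemma Int1_eq (hf : HasInt1 S f c) : Int1 S f = c := by
  rw [Int1, hf.2, EReal.toReal_coe]

lemma of_mem (hf : f ∈ S.L) : HasInt1 S f (S.I f) :=
  hasInt1_iff_upperInt_le.2
    ⟨(upperInt_coe hf).le, ((upperInt_coe (S.neg_mem hf)).trans (by rw [S.I_neg hf])).le⟩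

lemma zero : HasInt1 S (0 : X → ℝ) 0 := by
  simpa only [S.I_zero] using of_mem S.zero_mem

lemma nonneg (hf : HasInt1 S f c) (hf₀ : 0 ≤ f) : 0 ≤ c := by
  rw [← EReal.coe_nonneg, ← hf.2]
  exact upperInt_nonneg fun x => EReal.coe_nonneg.2 (hf₀ x)

lemma neg (hf : HasInt1 S f c) : HasInt1 S (-f) (-c) := by
  rw [hasInt1_iff_upperInt_le] at hf ⊢
  simpa only [neg_neg] using hf.symm

lemma add (hf : HasInt1 S f c) (hg : HasInt1 S g d) : HasInt1 S (f + g) (c + d) := by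
  have upper_add {f g : X → ℝ} {c d : ℝ} (hf : HasInt1 S f c) (hg : HasInt1 S g d) :
      upperInt S (fun x => ((f + g) x : EReal)) ≤ (c + d : ℝ) := by
    rw [EReal.coe_add, ← hf.2, ← hg.2]
    exact upperInt_add_le (hf.2 ▸ EReal.coe_ne_top c) (hg.2 ▸ EReal.coe_ne_top d)
  refine hasInt1_iff_upperInt_le.2 ⟨upper_add hf hg, ?_⟩
  simpa only [neg_add] using upper_add hf.neg hg.neg

lemma smul_of_pos {a : ℝ} (ha : 0 < a) (hf : HasInt1 S f c) : HasInt1 S (a • f) (a * c) := by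
  have upper_smul {f : X → ℝ} {c : ℝ} (hf : HasInt1 S f c) :
      upperInt S (fun x => ((a • f) x : EReal)) ≤ (a * c : ℝ) := by
    rw [EReal.coe_mul, ← hf.2]
    exact upperInt_const_mul_le (f := fun x => (f x : EReal)) ha
  refine hasInt1_iff_upperInt_le.2 ⟨upper_smul hf, ?_⟩
  simpa only [smul_neg, mul_neg] using upper_smul hf.neg

lemma smul (a : ℝ) (hf : HasInt1 S f c) : HasInt1 S (a • f) (a * c) := by
  rcases lt_trichotomy a 0 with ha | rfl | ha
  · simpa using hf.neg.smul_of_pos (neg_pos.2 ha)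
  · simpa using zero
  · exact hf.smul_of_pos ha

end HasInt1

lemma integrable1_of_upperInt_add_upperInt_neg_nonpos {f : X → ℝ}
    (hf : upperInt S (fun x => (f x : EReal)) ≠ ⊤)
    (hf' : upperInt S (fun x => ((-f) x : EReal)) ≠ ⊤)
    (h : upperInt S (fun x => (f x : EReal)) + upperInt S (fun x => ((-f) x : EReal)) ≤ 0) :
    Integrable1 S f := by
  obtain ⟨hbot, hbot'⟩ := EReal.add_ne_bot_iff.1
    (ne_bot_of_le_ne_bot EReal.zero_ne_bot (upperInt_add_upperInt_neg_nonneg hf hf'))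
  obtain ⟨c, hc⟩ : ∃ c : ℝ, (c : EReal) = upperInt S fun x => (f x : EReal) :=
    ⟨_, EReal.coe_toReal hf hbot⟩
  obtain ⟨d, hd⟩ : ∃ d : ℝ, (d : EReal) = upperInt S fun x => ((-f) x : EReal) :=
    ⟨_, EReal.coe_toReal hf' hbot'⟩
  rw [← hc, ← hd, ← EReal.coe_add, ← EReal.coe_zero, EReal.coe_le_coe_iff] at h
  have hdc : (d : EReal) ≤ (-c : ℝ) := EReal.coe_le_coe (by linarith)
  exact (hasInt1_iff_upperInt_le.2 ⟨hc.ge, hd.ge.trans hdc⟩).integrable1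

lemma integrable1_iff_forall_exists_Iup_add_Iup_le {f : X → ℝ} :
    Integrable1 S f ↔ ∀ ε : ℝ, 0 < ε → ∃ G H : X → EReal, MemLup S G ∧ MemLup S H ∧
      (∀ x, (f x : EReal) ≤ G x) ∧ (∀ x, ((-f) x : EReal) ≤ H x) ∧ Iup S G + Iup S H ≤ ε := by
  constructor
  · intro hf ε hε
    have lt_add_half (c : ℝ) : (c : EReal) < (c + ε / 2 : ℝ) := EReal.coe_lt_coe (by linarith)
    obtain ⟨G, hG, hfG, hGlt⟩ := upperInt_lt_iff.1 (hf.hasInt1.2.trans_lt (lt_add_half _))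
    obtain ⟨H, hH, hfH, hHlt⟩ := upperInt_lt_iff.1 (hf.hasInt1.neg.2.trans_lt (lt_add_half _))
    refine ⟨G, H, hG, hH, hfG, hfH, (add_le_add hGlt.le hHlt.le).trans ?_⟩
    rw [← EReal.coe_add, EReal.coe_le_coe_iff]
    linarith
  · intro h
    obtain ⟨G, H, hG, hH, hfG, hfH, hGH⟩ := h 1 one_pos
    have hfin : Iup S G ≠ ⊤ ∧ Iup S H ≠ ⊤ :=
      (EReal.add_ne_top_iff_ne_top₂ (Iup_ne_bot hG) (Iup_ne_bot hH)).1
        (ne_top_of_le_ne_top (EReal.coe_ne_top 1) hGH)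
    have hpos := ne_top_of_le_ne_top hfin.1 (upperInt_le_Iup hG hfG)
    have hneg := ne_top_of_le_ne_top hfin.2 (upperInt_le_Iup hH hfH)
    refine integrable1_of_upperInt_add_upperInt_neg_nonpos hpos hneg
      (EReal.le_of_forall_lt_iff_le.1 fun ε hε => ?_)
    obtain ⟨G, H, hG, hH, hfG, hfH, hGH⟩ := h ε (EReal.coe_pos.1 hε)
    exact (add_le_add (upperInt_le_Iup hG hfG) (upperInt_le_Iup hH hfH)).trans hGH

namespace Integrable1

variable {f g : X → ℝ}

lemma neg (hf : Integrable1 S f) : Integrable1 S (-f) :=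
  hf.hasInt1.neg.integrable1

lemma sup (hf : Integrable1 S f) (hg : Integrable1 S g) : Integrable1 S (f ⊔ g) := by
  refine integrable1_iff_forall_exists_Iup_add_Iup_le.2 fun ε hε => ?_
  obtain ⟨G, H, hG, hH, hfG, hfH, hGH⟩ :=
    integrable1_iff_forall_exists_Iup_add_Iup_le.1 hf (ε / 2) (half_pos hε)
  obtain ⟨G', H', hG', hH', hgG', hgH', hGH'⟩ :=
    integrable1_iff_forall_exists_Iup_add_Iup_le.1 hg (ε / 2) (half_pos hε)
  refine ⟨G ⊔ G', H ⊓ H', hG.sup hG', hH.inf hH', fun x => ?_, fun x => ?_, ?_⟩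
  · simpa only [Pi.sup_apply, EReal.coe_strictMono.monotone.map_max] using
      sup_le_sup (hfG x) (hgG' x)
  · simpa only [Pi.neg_apply, Pi.sup_apply, Pi.inf_apply, neg_sup,
      EReal.coe_strictMono.monotone.map_min] using
      inf_le_inf (hfH x) (hgH' x)
  · have gap : (G ⊔ G') + (H ⊓ H') ≤ (G + H) + (G' + H') := fun x =>
      sup_add_inf_le_add_add_add (add_nonneg_of_coe_le_of_coe_neg_le (hfG x) (hfH x))
        (add_nonneg_of_coe_le_of_coe_neg_le (hgG' x) (hgH' x))
    calc Iup S (G ⊔ G') + Iup S (H ⊓ H')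
        = Iup S ((G ⊔ G') + (H ⊓ H')) := (Iup_add (hG.sup hG') (hH.inf hH')).symm
      _ ≤ Iup S ((G + H) + (G' + H')) :=
          Iup_mono ((hG.sup hG').add (hH.inf hH')) ((hG.add hH).add (hG'.add hH')) gap
      _ = (Iup S G + Iup S H) + (Iup S G' + Iup S H') := by
          rw [Iup_add (hG.add hH) (hG'.add hH'), Iup_add hG hH, Iup_add hG' hH']
      _ ≤ (ε / 2 : ℝ) + (ε / 2 : ℝ) := add_le_add hGH hGH'
      _ = ε := by rw [← EReal.coe_add, add_halves]

lemma inf (hf : Integrable1 S f) (hg : Integrable1 S g) : Integrable1 S (f ⊓ g) := by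
  simpa only [neg_sup, neg_neg] using (hf.neg.sup hg.neg).neg

end Integrable1

end

/-- The set `L¹` of `I`-integrable functions is a vector subspace of `ℝ^X` closed under
pointwise max and min, it contains `L`, and the Daniell extension `I¹` is a positive
linear functional on it extending `I`. -/
theorem daniell_extension_basic (S : IntegralSystem X) :
    Integrable1 S (0 : X → ℝ) ∧
    (∀ f g : X → ℝ, Integrable1 S f → Integrable1 S g →
      Integrable1 S (f + g) ∧ Int1 S (f + g) = Int1 S f + Int1 S g) ∧
    (∀ (c : ℝ) (f : X → ℝ), Integrable1 S f →
      Integrable1 S (c • f) ∧ Int1 S (c • f) = c * Int1 S f) ∧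
    (∀ f g : X → ℝ, Integrable1 S f → Integrable1 S g →
      Integrable1 S (f ⊔ g) ∧ Integrable1 S (f ⊓ g)) ∧
    (∀ f ∈ S.L, Integrable1 S f ∧ Int1 S f = S.I f) ∧
    (∀ f : X → ℝ, Integrable1 S f → (∀ x, 0 ≤ f x) → 0 ≤ Int1 S f) :=
  ⟨HasInt1.zero.integrable1,
    fun _ _ hf hg =>
      have h := hf.hasInt1.add hg.hasInt1
      ⟨h.integrable1, h.Int1_eq⟩,
    fun c _ hf =>
      have h := hf.hasInt1.smul c
      ⟨h.integrable1, h.Int1_eq⟩,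
    fun _ _ hf hg => ⟨hf.sup hg, hf.inf hg⟩,
    fun _ hf =>
      have h := HasInt1.of_mem hf
      ⟨h.integrable1, h.Int1_eq⟩,
    fun _ hf hf₀ => hf.hasInt1.nonneg hf₀⟩
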